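/- arXiv:1301.0156 — 2 statements merged into one kernel-verified Lean document; each statement's English description precedes it below -/
import Mathlib

section
/- Let μ, ν ∈ ℝ. The double inequality (x² + μx + 12)/(12x⁴(x+1)²) < [ψ'(x)]² + ψ''(x) < (x² + νx + 12)/(12x⁴(x+1)²) holds for all x ∈ (0,∞) if and only if μ ≤ 0 and ν ≥ 4. -/
/-- The digamma function `ψ(x) = Γ'(x)/Γ(x)`. -/
noncomputable def digamma (x : ℝ) : ℝ := deriv Real.Gamma x / Real.Gamma x

noncomputable def psT (k : ℕ) (x : ℝ) : ℝ := ∑' n : ℕ, 1 / (x + n) ^ k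

theorem ps_summable (k : ℕ) (hk : 2 ≤ k) (x : ℝ) (hx : 0 < x) :
    Summable (fun n : ℕ => 1 / (x + n) ^ k) := by
  have h := (Real.summable_one_div_nat_add_rpow x k).2 (by exact_mod_cast hk)
  refine h.congr fun n => ?_
  have : (0 : ℝ) ≤ n := n.cast_nonneg
  rw [abs_of_pos (by linarith), Real.rpow_natCast, add_comm]

theorem psT_shift (k : ℕ) (hk : 2 ≤ k) (x : ℝ) (hx : 0 < x) :
    psT k x = psT k (x + 1) + 1 / x ^ k := by
  unfold psT
  rw [(ps_summable k hk x hx).tsum_eq_zero_add]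
  simp only [Nat.cast_zero, add_zero, Nat.cast_add, Nat.cast_one]
  rw [add_comm]
  congr 2
  ext n
  rw [show x + 1 + (n : ℝ) = x + (n + 1) by ring]

theorem psT_lim (k : ℕ) (x : ℝ) :
    Filter.Tendsto (fun n : ℕ => psT k (x + n)) Filter.atTop (nhds 0) := by
  have h := tendsto_sum_nat_add (fun n : ℕ => 1 / (x + (n : ℝ)) ^ k)
  refine h.congr fun n => ?_
  unfold psT
  congr 1
  ext m
  push_cast
  rw [show x + ((m : ℝ) + n) = x + n + m by ring]

/-- telescoping principle -/
theorem ps_tele (F : ℝ → ℝ) (hF : ∀ y, 0 < y → F (y + 1) < F y) (x : ℝ) (hx : 0 < x)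
    (hl : Filter.Tendsto (fun n : ℕ => F (x + n)) Filter.atTop (nhds 0)) : 0 < F x := by
  have hanti : Antitone (fun n : ℕ => F (x + n)) := by
    apply antitone_nat_of_succ_le
    intro n
    have : (0 : ℝ) ≤ n := n.cast_nonneg
    have := hF (x + n) (by linarith)
    push_cast
    rw [← add_assoc]
    exact this.le
  have h1 := hanti.le_of_tendsto hl 1
  simp only [Nat.cast_one] at h1
  linarith [hF x hx]

theorem psT_hasDeriv (k : ℕ) (hk : 2 ≤ k) (x : ℝ) (hx : 0 < x) :
    HasDerivAt (psT k) (-k * psT (k + 1) x) x := by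
  have h := hasDerivAt_tsum_of_isPreconnected (𝕜 := ℝ) (F := ℝ)
    (g := fun (n : ℕ) (y : ℝ) => 1 / (y + n) ^ k)
    (g' := fun (n : ℕ) (y : ℝ) => -k * (1 / (y + n) ^ (k + 1)))
    (u := fun n : ℕ => k * (1 / (x / 2 + n) ^ (k + 1)))
    (t := Set.Ioi (x / 2)) (y₀ := x) (y := x)
    ((ps_summable (k + 1) (by omega) (x / 2) (by linarith)).mul_left _) isOpen_Ioi
    isPreconnected_Ioi ?_ ?_ (by simp; linarith) (ps_summable k hk x hx) (by simp; linarith)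
  · rw [tsum_mul_left] at h
    exact h
  · intro n y hy
    have hy : x / 2 < y := hy
    have hn : (0 : ℝ) ≤ n := n.cast_nonneg
    have hp : 0 < y + n := by linarith
    have h0 : HasDerivAt (fun z : ℝ => (z + n) ^ k) (k * (y + n) ^ (k - 1) * 1) y :=
      ((hasDerivAt_id y).add_const (n : ℝ)).fun_pow k
    have h1 := h0.fun_inv (pow_ne_zero k hp.ne')
    simp only [one_div]
    have he : -(k : ℝ) * ((y + n) ^ (k + 1))⁻¹ =
        -(k * (y + n) ^ (k - 1) * 1) / ((y + n) ^ k) ^ 2 := by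
      obtain ⟨j, rfl⟩ : ∃ j, k = j + 1 := ⟨k - 1, by omega⟩
      rw [Nat.add_sub_cancel]
      field_simp
      ring
    rw [he]
    exact h1
  · intro n y hy
    have hy : x / 2 < y := hy
    have hn : (0 : ℝ) ≤ n := n.cast_nonneg
    have hp : 0 < y + n := by linarith
    rw [norm_mul, norm_neg, Real.norm_of_nonneg (by positivity : (0 : ℝ) ≤ k),
      Real.norm_of_nonneg (by positivity)]
    gcongr

noncomputable def psG (x : ℝ) : ℝ := ∑' n : ℕ, (1 / (1 + (n : ℝ)) - 1 / (x + n))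

theorem psG_summable (x : ℝ) (hx : 0 < x) :
    Summable (fun n : ℕ => (1 / (1 + (n : ℝ)) - 1 / (x + n))) := by
  have h1 := ((ps_summable 2 le_rfl 1 one_pos).add (ps_summable 2 le_rfl x hx)).mul_left |x - 1|
  refine Summable.of_norm_bounded h1 fun n => ?_
  have hn : (0 : ℝ) ≤ n := n.cast_nonneg
  have hp : 0 < x + n := by linarith
  have hq : 0 < 1 + (n : ℝ) := by linarith
  have : 1 / (1 + (n : ℝ)) - 1 / (x + n) = (x - 1) * ((1 / (1 + (n : ℝ))) * (1 / (x + n))) := by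
    field_simp
    ring
  rw [this, norm_mul, Real.norm_eq_abs]
  gcongr
  rw [Real.norm_of_nonneg (by positivity), ← one_div_pow, ← one_div_pow]
  nlinarith [sq_nonneg (1 / (1 + (n : ℝ)) - (1 / (x + n))), sq_nonneg (1 / (1 + (n : ℝ))),
    sq_nonneg (1 / (x + n))]

theorem psG_hasDeriv (x : ℝ) (hx : 0 < x) : HasDerivAt psG (psT 2 x) x := by
  refine hasDerivAt_tsum_of_isPreconnected (𝕜 := ℝ) (F := ℝ)
    (g := fun (n : ℕ) (y : ℝ) => (1 / (1 + (n : ℝ)) - 1 / (y + n)))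
    (g' := fun (n : ℕ) (y : ℝ) => (1 / (y + n) ^ 2))
    (u := fun n : ℕ => (1 / (x / 2 + n) ^ 2))
    (t := Set.Ioi (x / 2)) (y₀ := x) (y := x)
    (ps_summable 2 le_rfl (x / 2) (by linarith)) isOpen_Ioi
    isPreconnected_Ioi ?_ ?_ (by simp; linarith) (psG_summable x hx) (by simp; linarith)
  · intro n y hy
    have hy : x / 2 < y := hy
    have hn : (0 : ℝ) ≤ n := n.cast_nonneg
    have hp : 0 < y + n := by linarith
    have h1 := (((hasDerivAt_id y).add_const (n : ℝ)).fun_inv hp.ne').const_sub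
      (1 / (1 + (n : ℝ)))
    simp only [id_eq, ← one_div] at h1
    convert h1 using 1
    ring
  · intro n y hy
    have hy : x / 2 < y := hy
    have hn : (0 : ℝ) ≤ n := n.cast_nonneg
    have hp : 0 < y + n := by linarith
    rw [Real.norm_of_nonneg (by positivity)]
    gcongr

theorem psG_shift (x : ℝ) (hx : 0 < x) : psG (x + 1) = psG x + 1 / x := by
  have hs := (psG_summable (x + 1) (by linarith)).sub (psG_summable x hx)
  have h1 : psG (x + 1) - psG x = 1 / x := by
    unfold psG
    rw [← (psG_summable (x + 1) (by linarith)).tsum_sub (psG_summable x hx)]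
    refine HasSum.tsum_eq ?_
    rw [hs.hasSum_iff_tendsto_nat]
    have h2 : ∀ N : ℕ, ∑ n ∈ Finset.range N, ((1 / (1 + (n : ℝ)) - 1 / (x + 1 + n)) -
        (1 / (1 + (n : ℝ)) - 1 / (x + n))) = 1 / x - 1 / (x + N) := by
      intro N
      induction N with
      | zero => simp
      | succ N ih =>
        rw [Finset.sum_range_succ, ih]
        push_cast
        rw [show x + 1 + (N : ℝ) = x + (N + 1) by ring]
        ring
    simp only [h2]
    have h3 : Filter.Tendsto (fun N : ℕ => 1 / (x + (N : ℝ))) Filter.atTop (nhds 0) := by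
      simp only [one_div]
      exact tendsto_inv_atTop_zero.comp
        (Filter.tendsto_atTop_add_const_left _ x tendsto_natCast_atTop_atTop)
    simpa using h3.const_sub (1 / x)
  linarith

theorem ps_Gamma_contDiffAt (x : ℝ) (hx : 0 < x) : ContDiffAt ℝ 2 Real.Gamma x := by
  have hU : IsOpen {z : ℂ | 0 < z.re} := isOpen_lt continuous_const Complex.continuous_re
  have hd : DifferentiableOn ℂ Complex.Gamma {z : ℂ | 0 < z.re} := by
    intro z hz
    refine (Complex.differentiableAt_Gamma z fun m hm => ?_).differentiableWithinAt
    have hz : 0 < z.re := hz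
    rw [hm] at hz
    simp at hz
    linarith [(m.cast_nonneg : (0 : ℝ) ≤ m)]
  have ha : ContDiffAt ℂ 2 Complex.Gamma (x : ℂ) :=
    (hd.contDiffOn hU).contDiffAt (hU.mem_nhds (by simpa using hx))
  exact ha.real_of_complex

theorem ps_dig_log (x : ℝ) (hx : 0 < x) :
    HasDerivAt (Real.log ∘ Real.Gamma) (digamma x) x := by
  have h := ((ps_Gamma_contDiffAt x hx).differentiableAt (by norm_num)).hasDerivAt
  exact h.log (Real.Gamma_pos_of_pos hx).ne'

theorem ps_dig_diff (x : ℝ) (hx : 0 < x) : DifferentiableAt ℝ digamma x := by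
  have h := ps_Gamma_contDiffAt x hx
  have h1 : DifferentiableAt ℝ (deriv Real.Gamma) x :=
    (h.derivWithin (m := 1) (by norm_num)).differentiableAt (by norm_num)
  exact h1.div (h.differentiableAt (by norm_num)) (Real.Gamma_pos_of_pos hx).ne'

theorem ps_dig_shift (x : ℝ) (hx : 0 < x) : digamma (x + 1) = digamma x + 1 / x := by
  have h1 : HasDerivAt (fun y => (Real.log ∘ Real.Gamma) (y + 1)) (digamma (x + 1)) x :=
    (ps_dig_log (x + 1) (by linarith)).comp_add_const x 1
  have h2 := (ps_dig_log x hx).add (Real.hasDerivAt_log hx.ne')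
  have h3 : (fun y => (Real.log ∘ Real.Gamma) (y + 1)) =ᶠ[nhds x]
      (Real.log ∘ Real.Gamma) + Real.log := by
    filter_upwards [lt_mem_nhds hx] with y hy
    simp only [Function.comp, Pi.add_apply]
    rw [Real.Gamma_add_one hy.ne', Real.log_mul hy.ne' (Real.Gamma_pos_of_pos hy).ne', add_comm]
  rw [one_div]
  exact h1.unique (h2.congr_of_eventuallyEq h3)

theorem ps_ddig_shift (x : ℝ) (hx : 0 < x) :
    deriv digamma x = deriv digamma (x + 1) + 1 / x ^ 2 := by
  have h1 : HasDerivAt (fun y => digamma (y + 1)) (deriv digamma (x + 1)) x :=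
    (ps_dig_diff (x + 1) (by linarith)).hasDerivAt.comp_add_const x 1
  have h2 := (ps_dig_diff x hx).hasDerivAt.add (hasDerivAt_inv hx.ne')
  have h3 : (fun y => digamma (y + 1)) =ᶠ[nhds x] digamma + fun y => y⁻¹ := by
    filter_upwards [lt_mem_nhds hx] with y hy
    simp only [Pi.add_apply]
    rw [ps_dig_shift y hy, one_div]
  have := h1.unique (h2.congr_of_eventuallyEq h3)
  rw [this, one_div]
  ring

theorem ps_ddig_nonneg (x : ℝ) (hx : 0 < x) : 0 ≤ deriv digamma x := by
  have hm : MonotoneOn (deriv (Real.log ∘ Real.Gamma)) (Set.Ioi 0) :=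
    Real.convexOn_log_Gamma.monotoneOn_deriv
      (fun y hy => (ps_dig_log y hy).differentiableAt)
  have hm2 : MonotoneOn digamma (Set.Ioi 0) :=
    hm.congr fun y hy => (ps_dig_log y hy).deriv
  rw [← derivWithin_of_isOpen isOpen_Ioi (Set.mem_Ioi.2 hx)]
  exact hm2.derivWithin_nonneg

theorem ps_ddig_ge (x : ℝ) (hx : 0 < x) : psT 2 x ≤ deriv digamma x := by
  have h : ∀ n : ℕ, psT 2 x - psT 2 (x + n) ≤ deriv digamma x := by
    have h0 : ∀ n : ℕ, psT 2 x - psT 2 (x + n) = deriv digamma x - deriv digamma (x + n) := by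
      intro n
      induction n with
      | zero => simp
      | succ n ih =>
        have hn : (0 : ℝ) ≤ n := n.cast_nonneg
        have h1 := ps_ddig_shift (x + n) (by linarith)
        have h2 := psT_shift 2 le_rfl (x + n) (by linarith)
        push_cast
        rw [← add_assoc]
        linarith
    intro n
    have hn : (0 : ℝ) ≤ n := n.cast_nonneg
    have := ps_ddig_nonneg (x + n) (by linarith)
    linarith [h0 n]
  have hl := (psT_lim 2 x).const_sub (psT 2 x)
  rw [sub_zero] at hl
  exact le_of_tendsto' hl h

theorem ps_ddig_eq (x : ℝ) (hx : 0 < x) : deriv digamma x = psT 2 x := by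
  let h : ℝ → ℝ := fun y => digamma y - psG y
  have hd : ∀ y, 0 < y → HasDerivAt h (deriv digamma y - psT 2 y) y := fun y hy =>
    (ps_dig_diff y hy).hasDerivAt.sub (psG_hasDeriv y hy)
  have hmono : MonotoneOn h (Set.Ioi 0) := by
    refine monotoneOn_of_deriv_nonneg (convex_Ioi 0)
      (fun y hy => (hd y hy).continuousAt.continuousWithinAt) ?_ ?_
    · intro y hy
      rw [interior_Ioi] at hy
      exact (hd y hy).differentiableAt.differentiableWithinAt
    · intro y hy
      rw [interior_Ioi] at hy
      rw [(hd y hy).deriv]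
      linarith [ps_ddig_ge y hy]
  have hper : ∀ y, 0 < y → ∀ n : ℕ, h (y + n) = h y := by
    intro y hy n
    induction n with
    | zero => simp
    | succ n ih =>
      have hn : (0 : ℝ) ≤ n := n.cast_nonneg
      rw [← ih]
      push_cast
      rw [← add_assoc]
      simp only [h]
      rw [ps_dig_shift _ (by linarith), psG_shift _ (by linarith)]
      ring
  have hle : ∀ y z, 0 < y → 0 < z → h y ≤ h z := by
    intro y z hy hz
    obtain ⟨n, hn⟩ := exists_nat_ge y
    rw [← hper z hz n]
    exact hmono hy (Set.mem_Ioi.2 (by linarith)) (by linarith)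
  have hc : h =ᶠ[nhds x] fun _ => h x := by
    filter_upwards [lt_mem_nhds hx] with y hy
    exact le_antisymm (hle y x hy hx) (hle x y hx hy)
  have := (hd x hx).unique ((hasDerivAt_const x (h x)).congr_of_eventuallyEq hc)
  linarith

theorem ps_dddig_eq (x : ℝ) (hx : 0 < x) : deriv (deriv digamma) x = -2 * psT 3 x := by
  have hc : deriv digamma =ᶠ[nhds x] psT 2 := by
    filter_upwards [lt_mem_nhds hx] with y hy
    exact ps_ddig_eq y hy
  rw [hc.deriv_eq, (psT_hasDeriv 2 le_rfl x hx).deriv]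
  norm_num

noncomputable def psF (x : ℝ) : ℝ := psT 2 x ^ 2 - 2 * psT 3 x

noncomputable def psL (m c x : ℝ) : ℝ := (x ^ 2 + m * x + c) / (12 * x ^ 4 * (x + 1) ^ 2)

noncomputable def psQ (m c x : ℝ) : ℝ :=
  1 / x + 1 / (2 * x ^ 2) + x ^ 2 / 2 * (psL m c x - psL m c (x + 1))

theorem psF_shift (x : ℝ) (hx : 0 < x) :
    psF x - psF (x + 1) = 2 / x ^ 2 * (psT 2 x - 1 / x - 1 / (2 * x ^ 2)) := by
  have h2 := psT_shift 2 le_rfl x hx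
  have h3 := psT_shift 3 (by norm_num) x hx
  have h2' : psT 2 (x + 1) = psT 2 x - 1 / x ^ 2 := by linarith
  have h3' : psT 3 (x + 1) = psT 3 x - 1 / x ^ 3 := by linarith
  unfold psF
  rw [h2', h3']
  field_simp
  ring

theorem ps_xn (x : ℝ) : Filter.Tendsto (fun n : ℕ => x + (n : ℝ)) Filter.atTop Filter.atTop :=
  Filter.tendsto_atTop_add_const_left _ x tendsto_natCast_atTop_atTop

theorem ps_inv_lim : Filter.Tendsto (fun x : ℝ => 1 / x) Filter.atTop (nhds 0) := by
  simpa using tendsto_inv_atTop_zero (𝕜 := ℝ)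

theorem psL_lim' (m c : ℝ) :
    Filter.Tendsto (fun x : ℝ => x ^ 2 * psL m c x) Filter.atTop (nhds 0) := by
  have h : Filter.Tendsto (fun x : ℝ => 1 / 12 * (1 + m * (1 / x) + c * (1 / x) ^ 2) *
      (1 / (x + 1)) ^ 2) Filter.atTop (nhds (1 / 12 * (1 + m * 0 + c * 0 ^ 2) * 0 ^ 2)) := by
    have h1 : Filter.Tendsto (fun x : ℝ => 1 / (x + 1)) Filter.atTop (nhds 0) :=
      ps_inv_lim.comp (Filter.tendsto_atTop_add_const_right _ 1 Filter.tendsto_id)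
    exact ((((ps_inv_lim.const_mul m).const_add 1).add ((ps_inv_lim.pow 2).const_mul c)).const_mul
      (1 / 12)).mul (h1.pow 2)
  have h0 : (1 / 12 * (1 + m * 0 + c * 0 ^ 2) * 0 ^ 2 : ℝ) = 0 := by norm_num
  rw [h0] at h
  refine h.congr' ?_
  filter_upwards [Filter.eventually_gt_atTop 0] with x hx
  unfold psL
  field_simp

theorem psL_lim (m c : ℝ) : Filter.Tendsto (psL m c) Filter.atTop (nhds 0) := by
  have h := ((ps_inv_lim.pow 2).mul (psL_lim' m c))
  rw [mul_zero] at h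
  refine h.congr' ?_
  filter_upwards [Filter.eventually_gt_atTop 0] with x hx
  field_simp

theorem psQ_lim (m c : ℝ) : Filter.Tendsto (psQ m c) Filter.atTop (nhds 0) := by
  have hs : Filter.Tendsto (fun x : ℝ => x + 1) Filter.atTop Filter.atTop :=
    Filter.tendsto_atTop_add_const_right _ 1 Filter.tendsto_id
  have h1 : Filter.Tendsto (fun x : ℝ => x ^ 2 * psL m c (x + 1)) Filter.atTop (nhds 0) := by
    refine squeeze_zero_norm' ?_ (tendsto_norm_zero.comp ((psL_lim' m c).comp hs))
    filter_upwards [Filter.eventually_gt_atTop 0] with x hx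
    simp only [Function.comp, norm_mul, norm_pow]
    gcongr
    rw [Real.norm_of_nonneg hx.le, Real.norm_of_nonneg (by linarith)]
    linarith
  have h := (ps_inv_lim.add ((ps_inv_lim.pow 2).const_mul (1 / 2))).add
    (((psL_lim' m c).sub h1).const_mul (1 / 2))
  norm_num only at h
  refine h.congr' ?_
  filter_upwards [Filter.eventually_gt_atTop 0] with x hx
  unfold psQ
  field_simp

theorem psF_lim (x : ℝ) :
    Filter.Tendsto (fun n : ℕ => psF (x + n)) Filter.atTop (nhds 0) := by
  have h := ((psT_lim 2 x).pow 2).sub ((psT_lim 3 x).const_mul 2)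
  norm_num only at h
  exact h

theorem ps_lower (m c : ℝ)
    (hq : ∀ y, 0 < y → psQ m c y - psQ m c (y + 1) < 1 / y ^ 2) (x : ℝ) (hx : 0 < x) :
    psL m c x < psF x := by
  have hT : ∀ y, 0 < y → psQ m c y < psT 2 y := by
    intro y hy
    have := ps_tele (fun z => psT 2 z - psQ m c z) (fun z hz => by
      have := hq z hz
      have := psT_shift 2 le_rfl z hz
      linarith) y hy (by
        have := (psT_lim 2 y).sub ((psQ_lim m c).comp (ps_xn y))
        rw [sub_zero] at this
        exact this)
    linarith
  have := ps_tele (fun z => psF z - psL m c z) (fun z hz => by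
      have h1 := hT z hz
      have h2 := psF_shift z hz
      have h3 : psL m c z - psL m c (z + 1) =
          2 / z ^ 2 * (psQ m c z - 1 / z - 1 / (2 * z ^ 2)) := by
        unfold psQ
        field_simp
        ring
      have h4 : 2 / z ^ 2 * (psQ m c z - 1 / z - 1 / (2 * z ^ 2)) <
          2 / z ^ 2 * (psT 2 z - 1 / z - 1 / (2 * z ^ 2)) := by
        gcongr
      linarith) x hx (by
        have := (psF_lim x).sub ((psL_lim m c).comp (ps_xn x))
        rw [sub_zero] at this
        exact this)
  linarith

theorem ps_upper (m c : ℝ)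
    (hq : ∀ y, 0 < y → 1 / y ^ 2 < psQ m c y - psQ m c (y + 1)) (x : ℝ) (hx : 0 < x) :
    psF x < psL m c x := by
  have hT : ∀ y, 0 < y → psT 2 y < psQ m c y := by
    intro y hy
    have := ps_tele (fun z => psQ m c z - psT 2 z) (fun z hz => by
      have := hq z hz
      have := psT_shift 2 le_rfl z hz
      linarith) y hy (by
        have := ((psQ_lim m c).comp (ps_xn y)).sub (psT_lim 2 y)
        rw [sub_zero] at this
        exact this)
    linarith
  have := ps_tele (fun z => psL m c z - psF z) (fun z hz => by
      have h1 := hT z hz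
      have h2 := psF_shift z hz
      have h3 : psL m c z - psL m c (z + 1) =
          2 / z ^ 2 * (psQ m c z - 1 / z - 1 / (2 * z ^ 2)) := by
        unfold psQ
        field_simp
        ring
      have h4 : 2 / z ^ 2 * (psT 2 z - 1 / z - 1 / (2 * z ^ 2)) <
          2 / z ^ 2 * (psQ m c z - 1 / z - 1 / (2 * z ^ 2)) := by
        gcongr
      linarith) x hx (by
        have := ((psL_lim m c).comp (ps_xn x)).sub (psF_lim x)
        rw [sub_zero] at this
        exact this)
  linarith

theorem ps_low0 (x : ℝ) (hx : 0 < x) : psL 0 12 x < psF x := by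
  refine ps_lower 0 12 (fun x hx => ?_) x hx
  rw [← sub_pos]
  have : 1 / x ^ 2 - (psQ 0 12 x - psQ 0 12 (x + 1)) =
      (308 * x ^ 2 + 1016 * x ^ 3 + 1676 * x ^ 4 + 1376 * x ^ 5 + 536 * x ^ 6 + 80 * x ^ 7) /
      (24 * x ^ 2 * (x + 1) ^ 4 * (x + 2) ^ 4 * (x + 3) ^ 2) := by
    unfold psQ psL
    rw [show x + 1 + 1 = x + 2 by ring, show x + 2 + 1 = x + 3 by ring]
    field_simp
    ring
  rw [this]
  positivity

theorem ps_low4 (x : ℝ) (hx : 0 < x) : psL 4 0 x < psF x := by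
  refine ps_lower 4 0 (fun x hx => ?_) x hx
  rw [← sub_pos]
  have : 1 / x ^ 2 - (psQ 4 0 x - psQ 4 0 (x + 1)) =
      (1728 + 7488 * x + 13368 * x ^ 2 + 12540 * x ^ 3 + 6500 * x ^ 4 + 1764 * x ^ 5
        + 196 * x ^ 6) /
      (24 * x ^ 2 * (x + 1) ^ 4 * (x + 2) ^ 4 * (x + 3) ^ 2) := by
    unfold psQ psL
    rw [show x + 1 + 1 = x + 2 by ring, show x + 2 + 1 = x + 3 by ring]
    field_simp
    ring
  rw [this]
  positivity

theorem ps_up4 (x : ℝ) (hx : 0 < x) : psF x < psL 4 12 x := by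
  refine ps_upper 4 12 (fun x hx => ?_) x hx
  rw [← sub_pos]
  have : (psQ 4 12 x - psQ 4 12 (x + 1)) - 1 / x ^ 2 =
      (576 * x + 2244 * x ^ 2 + 3708 * x ^ 3 + 2944 * x ^ 4 + 1116 * x ^ 5 + 164 * x ^ 6) /
      (24 * x ^ 2 * (x + 1) ^ 4 * (x + 2) ^ 4 * (x + 3) ^ 2) := by
    unfold psQ psL
    rw [show x + 1 + 1 = x + 2 by ring, show x + 2 + 1 = x + 3 by ring]
    field_simp
    ring
  rw [this]
  positivity

theorem psT_bound (x : ℝ) (hx : 0 < x) : psT 2 x < 1 / x + 1 / x ^ 2 := by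
  have := ps_tele (fun z => 1 / z + (1 / z) ^ 2 - psT 2 z) (fun z hz => by
      have := psT_shift 2 le_rfl z hz
      have h : 1 / z + (1 / z) ^ 2 - (1 / (z + 1) + (1 / (z + 1)) ^ 2) - 1 / z ^ 2 =
        1 / (z * (z + 1) ^ 2) := by
        field_simp
        ring
      have h2 : 0 < 1 / (z * (z + 1) ^ 2) := by positivity
      linarith) x hx (by
        have h := ps_inv_lim.comp (ps_xn x)
        have := (h.add (h.pow 2)).sub (psT_lim 2 x)
        norm_num only at this
        exact this)
  simp only [one_div_pow] at this
  linarith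

theorem ps_near0 (x : ℝ) (hx : 0 < x) : psF x ≤ 1 / x ^ 4 - 2 / x ^ 3 + 4 / x ^ 2 + 1 := by
  have h1 := psF_shift x hx
  have h2 := psT_shift 2 le_rfl x hx
  have h3 := psT_bound (x + 1) (by linarith)
  have h4 := ps_up4 (x + 1) (by linarith)
  have h5 : psL 4 12 (x + 1) ≤ 1 := by
    unfold psL
    rw [div_le_one (by positivity)]
    have : 0 < x ^ 2 := by positivity
    have : 0 < x ^ 3 := by positivity
    have : 0 < x ^ 4 := by positivity
    have : 0 < x ^ 5 := by positivity
    have : 0 < x ^ 6 := by positivity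
    nlinarith
  have h6 : 1 / (x + 1) + 1 / (x + 1) ^ 2 ≤ 2 := by
    have a : 1 / (x + 1) ≤ 1 := by rw [div_le_one (by positivity)]; linarith
    have b : 1 / (x + 1) ^ 2 ≤ 1 := by rw [div_le_one (by positivity)]; nlinarith
    linarith
  have h7 : psT 2 x - 1 / x - 1 / (2 * x ^ 2) ≤ 2 + 1 / x ^ 2 - 1 / x - 1 / (2 * x ^ 2) := by
    linarith
  have h8 : 2 / x ^ 2 * (psT 2 x - 1 / x - 1 / (2 * x ^ 2)) ≤
      2 / x ^ 2 * (2 + 1 / x ^ 2 - 1 / x - 1 / (2 * x ^ 2)) := by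
    gcongr
  have h9 : 2 / x ^ 2 * (2 + 1 / x ^ 2 - 1 / x - 1 / (2 * x ^ 2)) =
      1 / x ^ 4 - 2 / x ^ 3 + 4 / x ^ 2 := by
    field_simp
    ring
  linarith

theorem stmt_2 (mu nu : ℝ) :
    (∀ x : ℝ, x ∈ Set.Ioi (0 : ℝ) →
      (x ^ 2 + mu * x + 12) / (12 * x ^ 4 * (x + 1) ^ 2) <
        (deriv digamma x) ^ 2 + deriv (deriv digamma) x ∧
      (deriv digamma x) ^ 2 + deriv (deriv digamma) x <
        (x ^ 2 + nu * x + 12) / (12 * x ^ 4 * (x + 1) ^ 2)) ↔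
    mu ≤ 0 ∧ 4 ≤ nu := by
  have key : ∀ x : ℝ, 0 < x →
      (deriv digamma x) ^ 2 + deriv (deriv digamma) x = psF x := by
    intro x hx
    rw [ps_ddig_eq x hx, ps_dddig_eq x hx]
    unfold psF
    ring
  constructor
  · intro h
    constructor
    · by_contra! hmu
      let x : ℝ := min 1 (mu / 1000)
      have hx : 0 < x := lt_min one_pos (by positivity)
      have hx1 : x ≤ 1 := min_le_left _ _
      have hx2 : x ≤ mu / 1000 := min_le_right _ _
      have h1 := (h x hx).1
      rw [key x hx, div_lt_iff₀ (by positivity)] at h1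
      have h2 := mul_le_mul_of_nonneg_right (ps_near0 x hx)
        (by positivity : 0 ≤ 12 * x ^ 4 * (x + 1) ^ 2)
      have h3 : (1 / x ^ 4 - 2 / x ^ 3 + 4 / x ^ 2 + 1) * (12 * x ^ 4 * (x + 1) ^ 2) =
          12 + x ^ 2 * (12 + 72 * x + 60 * x ^ 2 + 24 * x ^ 3 + 12 * x ^ 4) := by
        field_simp
        ring
      have p2 : x ^ 2 ≤ 1 := pow_le_one₀ hx.le hx1
      have p3 : x ^ 3 ≤ 1 := pow_le_one₀ hx.le hx1
      have p4 : x ^ 4 ≤ 1 := pow_le_one₀ hx.le hx1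
      have h4 : x ^ 2 * (12 + 72 * x + 60 * x ^ 2 + 24 * x ^ 3 + 12 * x ^ 4) ≤ x ^ 2 * 1000 := by
        gcongr
        linarith
      have h5 : x * x ≤ x * (mu / 1000) := by gcongr
      nlinarith
    · by_contra! hnu
      let x : ℝ := 12 / (4 - nu)
      have hx : 0 < x := div_pos (by norm_num) (by linarith)
      have h1 := (h x hx).2
      rw [key x hx] at h1
      have h2 := (ps_low4 x hx).trans h1
      unfold psL at h2
      rw [div_lt_div_iff_of_pos_right (by positivity)] at h2
      have h3 : x * (4 - nu) = 12 := div_mul_cancel₀ _ (by linarith)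
      linarith
  · rintro ⟨hmu, hnu⟩ x hx
    have hx : 0 < x := hx
    rw [key x hx]
    constructor
    · refine lt_of_le_of_lt ?_ (ps_low0 x hx)
      unfold psL
      gcongr
    · refine lt_of_lt_of_le (ps_up4 x hx) ?_
      unfold psL
      gcongr
end

section
/- For all x ∈ (0,∞), the inequality [ψ'(x)]² + ψ''(x) < (36 + 180x + 408x² + 504x³ + 352x⁴ + 132x⁵ + 21x⁶)/(36x⁴(1+x)⁶) holds. -/
open Filter Topology Real

noncomputable def lgT (n : ℕ) (x : ℝ) : ℝ :=
  x * (log (n + 2) - log (n + 1)) + log (n + 2) - log (x + n + 2)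

noncomputable def lgT' (n : ℕ) (x : ℝ) : ℝ :=
  (log (n + 2) - log (n + 1)) - 1 / (x + n + 2)

lemma lgSeq_succ (x : ℝ) (n : ℕ) :
    BohrMollerup.logGammaSeq x (n + 2) = BohrMollerup.logGammaSeq x (n + 1) + lgT n x := by
  unfold BohrMollerup.logGammaSeq lgT
  rw [Finset.sum_range_succ _ (n + 2), Nat.factorial_succ (n + 1), Nat.cast_mul, log_mul
    (by positivity) (by positivity)]
  push_cast
  rw [show (n : ℝ) + 1 + 1 = n + 2 by ring, show x + ((n : ℝ) + 2) = x + n + 2 by ring]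
  ring

lemma lgSeq_sum (x : ℝ) (N : ℕ) :
    BohrMollerup.logGammaSeq x (N + 1) =
      - log x - log (x + 1) + ∑ n ∈ Finset.range N, lgT n x := by
  induction N with
  | zero => simp [BohrMollerup.logGammaSeq, Finset.sum_range_succ]; ring
  | succ N ih => rw [Finset.sum_range_succ, lgSeq_succ, ih]; ring

lemma lg_tendsto {x : ℝ} (hx : 0 < x) :
    Tendsto (fun N => ∑ n ∈ Finset.range N, lgT n x) atTop
      (𝓝 (log (Gamma x) + log x + log (x + 1))) := by
  have h := (tendsto_add_atTop_iff_nat 1).2 (BohrMollerup.tendsto_log_gamma hx)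
  have h2 := h.add_const (log x + log (x + 1))
  rw [← add_assoc] at h2
  refine h2.congr fun N => ?_
  rw [lgSeq_sum]; ring

lemma lg_log_bounds (n : ℕ) :
    1 / ((n : ℝ) + 2) ≤ log (n + 2) - log (n + 1) ∧
      log (n + 2) - log (n + 1) ≤ 1 / ((n : ℝ) + 1) := by
  have h1 : (0 : ℝ) < n + 1 := by positivity
  have h2 : (0 : ℝ) < n + 2 := by positivity
  rw [← log_div h2.ne' h1.ne']
  constructor
  · have := Real.one_sub_inv_le_log_of_pos (div_pos h2 h1)
    refine le_trans (le_of_eq ?_) this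
    field_simp
    ring
  · have := Real.log_le_sub_one_of_pos (div_pos h2 h1)
    refine this.trans (le_of_eq ?_)
    field_simp
    ring

lemma sq_summable : Summable (fun n : ℕ => 1 / ((n : ℝ) + 1) ^ 2) := by
  have := (summable_nat_add_iff 1).2 (Real.summable_one_div_nat_pow.2 (one_lt_two))
  simpa using this

lemma lgT_hasDeriv (n : ℕ) {x : ℝ} (hx : 0 < x) : HasDerivAt (lgT n) (lgT' n x) x := by
  have h0 : x + n + 2 ≠ 0 := by positivity
  have h1 : HasDerivAt (fun y : ℝ => y + n + 2) 1 x := ((hasDerivAt_id x).add_const _).add_const _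
  have := (((hasDerivAt_id x).mul_const (log (n + 2) - log (n + 1))).add_const
    (log ((n : ℝ) + 2))).sub (h1.log h0)
  convert! this using 1
  simp [lgT']

lemma lgT'_bound (n : ℕ) {R x : ℝ} (hx : x ∈ Set.Ioo 0 R) :
    ‖lgT' n x‖ ≤ (R + 1) * (1 / ((n : ℝ) + 1) ^ 2) := by
  obtain ⟨h0, hR⟩ := hx
  obtain ⟨h1, h2⟩ := lg_log_bounds n
  have hn : (0 : ℝ) ≤ n := n.cast_nonneg
  have h3 : 1 / (x + n + 2) ≤ 1 / ((n : ℝ) + 2) :=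
    one_div_le_one_div_of_le (by positivity) (by linarith)
  unfold lgT'
  rw [Real.norm_of_nonneg (by linarith)]
  have h4 : 1 / ((n : ℝ) + 1) - 1 / (x + n + 2) = (x + 1) * (1 / ((n + 1) * (x + n + 2))) := by
    field_simp; ring
  have h5 : 1 / (((n : ℝ) + 1) * (x + n + 2)) ≤ 1 / ((n : ℝ) + 1) ^ 2 := by
    apply one_div_le_one_div_of_le (by positivity); nlinarith
  calc _ ≤ 1 / ((n : ℝ) + 1) - 1 / (x + n + 2) := by linarith
    _ = _ := h4
    _ ≤ (R + 1) * (1 / ((n : ℝ) + 1) ^ 2) :=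
      mul_le_mul (by linarith) h5 (by positivity) (by linarith)

lemma lgT_summable_one : Summable (fun n => lgT n 1) := by
  have hnn : ∀ n : ℕ, 0 ≤ lgT n 1 := by
    intro n
    have h : log (((n : ℝ) + 1) * (1 + n + 2)) ≤ log (((n : ℝ) + 2) * (n + 2)) :=
      log_le_log (by positivity) (by nlinarith)
    rw [log_mul (by positivity) (by positivity), log_mul (by positivity) (by positivity)] at h
    unfold lgT
    linarith
  exact ((hasSum_iff_tendsto_nat_of_nonneg hnn _).2 (lg_tendsto one_pos)).summable

lemma logGamma_eq {x : ℝ} (hx : 0 < x) :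
    log (Gamma x) = - log x - log (x + 1) + ∑' n, lgT n x := by
  have hs : Summable (fun n => lgT n x) :=
    summable_of_summable_hasDerivAt_of_isPreconnected (t := Set.Ioo 0 (x + 2)) (y₀ := 1)
      (sq_summable.mul_left (x + 2 + 1)) isOpen_Ioo isPreconnected_Ioo
      (fun n y hy => lgT_hasDeriv n hy.1) (fun n y hy => lgT'_bound n hy)
      ⟨one_pos, by linarith⟩ lgT_summable_one ⟨hx, by linarith⟩
  have := tendsto_nhds_unique hs.hasSum.tendsto_sum_nat (lg_tendsto hx)
  rw [this]; ring

lemma tsum_lgT_deriv {x : ℝ} (hx : 0 < x) :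
    HasDerivAt (fun y => ∑' n, lgT n y) (∑' n, lgT' n x) x :=
  hasDerivAt_tsum_of_isPreconnected (t := Set.Ioo 0 (x + 2)) (y₀ := 1)
      (sq_summable.mul_left (x + 2 + 1)) isOpen_Ioo isPreconnected_Ioo
      (fun n y hy => lgT_hasDeriv n hy.1) (fun n y hy => lgT'_bound n hy)
      ⟨one_pos, by linarith⟩ lgT_summable_one ⟨hx, by linarith⟩

lemma inv_pow_hasDeriv (c : ℝ) (k : ℕ) {x : ℝ} (h : 0 < x + c) :
    HasDerivAt (fun y : ℝ => 1 / (y + c) ^ (k + 1)) (-((k + 1) * (1 / (x + c) ^ (k + 2)))) x := by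
  have h1 : HasDerivAt (fun y : ℝ => y + c) 1 x := (hasDerivAt_id x).add_const _
  have h2 := (h1.fun_pow (k + 1)).fun_inv (pow_ne_zero _ h.ne')
  simp only [one_div]
  convert! h2 using 1
  push_cast
  field_simp
  ring

lemma digamma_eq {x : ℝ} (hx : 0 < x) :
    digamma x = - (1 / x) - 1 / (x + 1) + ∑' n, lgT' n x := by
  have hd : DifferentiableAt ℝ Gamma x := Real.differentiableAt_Gamma (fun m => by
    have : (0 : ℝ) ≤ m := m.cast_nonneg
    linarith)
  have h1 := hd.hasDerivAt.log (Gamma_pos_of_pos hx).ne'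
  have ha : HasDerivAt (fun y : ℝ => y + 1) 1 x := (hasDerivAt_id x).add_const _
  have h2 := (((hasDerivAt_log hx.ne').neg).sub (ha.log (by positivity))).add (tsum_lgT_deriv hx)
  have he : (fun y => log (Gamma y)) =ᶠ[𝓝 x]
      ((-log - fun y : ℝ => log (y + 1)) + fun y => ∑' n, lgT n y) := by
    filter_upwards [lt_mem_nhds hx] with y hy
    simpa using logGamma_eq hy
  have := h1.unique (h2.congr_of_eventuallyEq he)
  unfold digamma
  rw [this, ← one_div]

lemma inv_bound (n k : ℕ) {x : ℝ} (hx : 0 < x) :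
    1 / (x + (n + 2)) ^ (k + 2) ≤ 1 / ((n : ℝ) + 1) ^ 2 := by
  apply one_div_le_one_div_of_le (by positivity)
  have hn : (0 : ℝ) ≤ n := n.cast_nonneg
  calc ((n : ℝ) + 1) ^ 2 ≤ (x + (n + 2)) ^ 2 := pow_le_pow_left₀ (by positivity) (by linarith) 2
    _ ≤ _ := pow_le_pow_right₀ (by linarith) (by omega)

lemma inv_summable (k : ℕ) {x : ℝ} (hx : 0 < x) :
    Summable (fun n : ℕ => 1 / (x + ((n : ℝ) + 2)) ^ (k + 2)) :=
  Summable.of_nonneg_of_le (fun n => by positivity) (fun n => inv_bound n k hx) sq_summable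

lemma tsum_lgT'_deriv {x : ℝ} (hx : 0 < x) :
    HasDerivAt (fun y => ∑' n, lgT' n y) (∑' n : ℕ, 1 / (x + ((n : ℝ) + 2)) ^ 2) x := by
  refine hasDerivAt_tsum_of_isPreconnected (t := Set.Ioi 0) (y₀ := 1)
    (g' := fun (n : ℕ) (y : ℝ) => 1 / (y + ((n : ℝ) + 2)) ^ 2) sq_summable isOpen_Ioi
    isPreconnected_Ioi ?_ ?_ (Set.mem_Ioi.2 one_pos) ?_ hx
  · intro n y hy
    have hy : 0 < y := hy
    have := (inv_pow_hasDeriv ((n : ℝ) + 2) 0 (x := y) (by positivity)).const_sub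
      (log ((n : ℝ) + 2) - log (n + 1))
    convert! this using 1
    · funext z; simp [lgT', add_assoc]
    · simp
  · intro n y hy
    have hy : 0 < y := hy
    rw [Real.norm_of_nonneg (by positivity)]
    exact inv_bound n 0 hy
  · exact Summable.of_norm_bounded (sq_summable.mul_left (2 + 1))
      (fun n => lgT'_bound n ⟨one_pos, one_lt_two⟩)

lemma deriv_digamma {x : ℝ} (hx : 0 < x) :
    deriv digamma x = 1 / x ^ 2 + 1 / (x + 1) ^ 2 + ∑' n : ℕ, 1 / (x + ((n : ℝ) + 2)) ^ 2 := by
  have h0 := inv_pow_hasDeriv 0 0 (x := x) (by simpa)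
  have h1 := inv_pow_hasDeriv 1 0 (x := x) (by positivity)
  have h2 := (h0.fun_neg.fun_sub h1).fun_add (tsum_lgT'_deriv hx)
  have he : digamma =ᶠ[𝓝 x] fun y => - (1 / (y + 0) ^ (0 + 1)) - 1 / (y + 1) ^ (0 + 1)
      + ∑' n, lgT' n y := by
    filter_upwards [lt_mem_nhds hx] with y hy
    simpa using digamma_eq hy
  rw [(h2.congr_of_eventuallyEq he).deriv]
  simp

lemma tsum_sq_deriv {x : ℝ} (hx : 0 < x) :
    HasDerivAt (fun y : ℝ => ∑' n : ℕ, 1 / (y + ((n : ℝ) + 2)) ^ 2)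
      (∑' n : ℕ, -(2 * (1 / (x + ((n : ℝ) + 2)) ^ 3))) x := by
  refine hasDerivAt_tsum_of_isPreconnected (t := Set.Ioi 0) (y₀ := 1)
    (g' := fun (n : ℕ) (y : ℝ) => -(2 * (1 / (y + ((n : ℝ) + 2)) ^ 3)))
    (sq_summable.mul_left 2) isOpen_Ioi
    isPreconnected_Ioi ?_ ?_ (Set.mem_Ioi.2 one_pos) (inv_summable 0 one_pos) hx
  · intro n y hy
    have hy : 0 < y := hy
    have := inv_pow_hasDeriv ((n : ℝ) + 2) 1 (x := y) (by positivity)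
    convert! this using 1
    norm_num
  · intro n y hy
    have hy : 0 < y := hy
    rw [norm_neg, Real.norm_of_nonneg (by positivity)]
    have := inv_bound n 1 hy
    linarith

lemma deriv2_digamma {x : ℝ} (hx : 0 < x) :
    deriv (deriv digamma) x =
      - (2 / x ^ 3) - 2 / (x + 1) ^ 3 - ∑' n : ℕ, 2 * (1 / (x + ((n : ℝ) + 2)) ^ 3) := by
  have h0 := inv_pow_hasDeriv 0 1 (x := x) (by simpa)
  have h1 := inv_pow_hasDeriv 1 1 (x := x) (by positivity)
  have h2 := (h0.fun_add h1).fun_add (tsum_sq_deriv hx)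
  have he : deriv digamma =ᶠ[𝓝 x] fun y => 1 / (y + 0) ^ (1 + 1) + 1 / (y + 1) ^ (1 + 1)
      + ∑' n : ℕ, 1 / (y + ((n : ℝ) + 2)) ^ 2 := by
    filter_upwards [lt_mem_nhds hx] with y hy
    simpa using deriv_digamma hy
  rw [(h2.congr_of_eventuallyEq he).deriv, tsum_neg]
  norm_num
  ring

noncomputable def bA (z : ℝ) : ℝ := 1 / z + 1 / (2 * z ^ 2) + 1 / (6 * z ^ 3)
noncomputable def bB (z : ℝ) : ℝ := 1 / z ^ 2 + 1 / z ^ 3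

lemma bA_step {z : ℝ} (hz : 0 < z) : 1 / z ^ 2 ≤ bA z - bA (z + 1) := by
  have : bA z - bA (z + 1) - 1 / z ^ 2 = 1 / (6 * z ^ 3 * (z + 1) ^ 3) := by
    unfold bA; field_simp; ring
  have h : 0 < 1 / (6 * z ^ 3 * (z + 1) ^ 3) := by positivity
  linarith

lemma bB_step {z : ℝ} (hz : 0 < z) : bB z - bB (z + 1) ≤ 2 * (1 / z ^ 3) := by
  have : 2 * (1 / z ^ 3) - (bB z - bB (z + 1)) = (2 * z + 1) / (z ^ 3 * (z + 1) ^ 3) := by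
    unfold bB; field_simp; ring
  have h : 0 < (2 * z + 1) / (z ^ 3 * (z + 1) ^ 3) := by positivity
  linarith

lemma sum_A {x : ℝ} (hx : 0 < x) (N : ℕ) :
    ∑ n ∈ Finset.range N, 1 / (x + ((n : ℝ) + 2)) ^ 2 ≤ bA (x + 2) - bA (x + (N + 2)) := by
  induction N with
  | zero => simp
  | succ N ih =>
    rw [Finset.sum_range_succ]
    have := bA_step (z := x + (N + 2)) (by positivity)
    push_cast
    rw [show x + ((N : ℝ) + 1 + 2) = x + (N + 2) + 1 by ring]
    linarith

lemma sum_B {x : ℝ} (hx : 0 < x) (N : ℕ) :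
    bB (x + 2) - bB (x + (N + 2)) ≤ ∑ n ∈ Finset.range N, 2 * (1 / (x + ((n : ℝ) + 2)) ^ 3) := by
  induction N with
  | zero => simp
  | succ N ih =>
    rw [Finset.sum_range_succ]
    have := bB_step (z := x + (N + 2)) (by positivity)
    push_cast
    rw [show x + ((N : ℝ) + 1 + 2) = x + (N + 2) + 1 by ring]
    linarith

lemma tsum_A {x : ℝ} (hx : 0 < x) : ∑' n : ℕ, 1 / (x + ((n : ℝ) + 2)) ^ 2 ≤ bA (x + 2) := by
  refine Real.tsum_le_of_sum_range_le (fun n => by positivity) fun N => (sum_A hx N).trans ?_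
  have : 0 ≤ bA (x + (N + 2)) := by unfold bA; positivity
  linarith

lemma tsum_B {x : ℝ} (hx : 0 < x) :
    bB (x + 2) ≤ ∑' n : ℕ, 2 * (1 / (x + ((n : ℝ) + 2)) ^ 3) := by
  have hs := ((inv_summable 1 hx).mul_left 2).hasSum.tendsto_sum_nat
  have h0 : Tendsto (fun N : ℕ => x + ((N : ℝ) + 2)) atTop atTop :=
    tendsto_atTop_add_const_left _ _
      (tendsto_atTop_add_const_right _ _ tendsto_natCast_atTop_atTop)
  have hp : ∀ k : ℕ, k ≠ 0 → Tendsto (fun N : ℕ => 1 / (x + ((N : ℝ) + 2)) ^ k) atTop (𝓝 0) := by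
    intro k hk
    simp only [one_div]
    exact tendsto_inv_atTop_zero.comp ((tendsto_pow_atTop hk).comp h0)
  have hB : Tendsto (fun N : ℕ => bB (x + 2) - bB (x + (N + 2))) atTop (𝓝 (bB (x + 2))) := by
    have := ((hp 2 two_ne_zero).add (hp 3 three_ne_zero)).const_sub (bB (x + 2))
    simpa [bB] using this
  exact le_of_tendsto_of_tendsto' hB hs (sum_B hx)

theorem stmt_4 (x : ℝ) (hx : x ∈ Set.Ioi (0 : ℝ)) :
    (deriv digamma x) ^ 2 + deriv (deriv digamma) x <
      (36 + 180 * x + 408 * x ^ 2 + 504 * x ^ 3 + 352 * x ^ 4 + 132 * x ^ 5 +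
        21 * x ^ 6) / (36 * x ^ 4 * (1 + x) ^ 6) := by
  have hx : 0 < x := hx
  have h1 : deriv digamma x ≤ 1 / x ^ 2 + bA (x + 1) := by
    have a := tsum_A hx
    have b := bA_step (z := x + 1) (by positivity)
    rw [show x + 1 + 1 = x + 2 by ring] at b
    rw [deriv_digamma hx]; linarith
  have h1' : 0 ≤ deriv digamma x := by
    rw [deriv_digamma hx]
    have : 0 ≤ ∑' n : ℕ, 1 / (x + ((n : ℝ) + 2)) ^ 2 := tsum_nonneg fun n => by positivity
    positivity
  have h2 : deriv (deriv digamma) x ≤ - (2 / x ^ 3) - bB (x + 1) := by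
    have a := tsum_B hx
    have b := bB_step (z := x + 1) (by positivity)
    rw [show x + 1 + 1 = x + 2 by ring, mul_one_div] at b
    rw [deriv2_digamma hx]; linarith
  have h3 := pow_le_pow_left₀ h1' h1 2
  have h4 : (36 + 180 * x + 408 * x ^ 2 + 504 * x ^ 3 + 352 * x ^ 4 + 132 * x ^ 5 +
        21 * x ^ 6) / (36 * x ^ 4 * (1 + x) ^ 6) -
      ((1 / x ^ 2 + bA (x + 1)) ^ 2 + (- (2 / x ^ 3) - bB (x + 1))) =
      (x + 5 * x ^ 2 + 9 * x ^ 3 + 7 * x ^ 4 + 2 * x ^ 5) / (x ^ 4 * (1 + x) ^ 6) := by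
    unfold bA bB
    rw [add_comm x 1]
    field_simp
    ring
  have h5 : 0 < (x + 5 * x ^ 2 + 9 * x ^ 3 + 7 * x ^ 4 + 2 * x ^ 5) / (x ^ 4 * (1 + x) ^ 6) := by
    positivity
  linarith
end
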